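/- Suppose v_0 : ℝ → ℝ is nondecreasing and 1-Lipschitz and satisfies the invariance identity v(x,t) = v_0(x) − t·c/4 for all x ∈ ℝ and t > 0, where v(x,t) = sup_{q∈ℝ}{v_0(q) − I(x,t,q)}. Then there cannot exist x ≠ 0 and ε, δ > 0 such that v_0(x) ≥ v_0(q) + (ρ* + δ)(x − q) for all q ∈ [x−ε, x] and v_0(x) ≥ v_0(q) − (1 − ρ* − δ)(q − x) for all q ∈ [x, x+ε]. -/

import Mathlib

/-!
Write `f₀ ρ = ρ (1 - ρ)`. Every `ρ ∈ [0, 1]` gives the linear bound `l g₀ (y / l) ≥ l f₀ ρ - ρ y`,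
so integrating along a path yields lower bounds on its cost without any convexity argument
(`cost_lower_bound`): with `ρ = 0` and `ρ = 1` the cost is at least `0` and at least the net
leftward displacement, and along a path avoiding the origin it is at least
`f₀ ρ t - ρ (x - q)`.

Suppose there is a kink at `x ≠ 0`. After shrinking `δ`, the number `r = ρ* + δ` satisfies
`ρ* < r ≤ 1/2`, hence `f₀ r > c / 4`; after shrinking `ε`, `ε ≤ |x| / 4`. Take `t = ε`.

* Paths starting within `ε` of `x` and avoiding `0`: the bound with `ρ = r` (starting on the left)
  or `ρ = 1 - r` (starting on the right) cancels the linear kink bound on `v₀ q - v₀ x` exactly,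
  leaving `v₀ q - cost ≤ v₀ x - f₀ r t`.
* Paths starting within `ε` of `x` and hitting `0`: they move left by at least `3 |x| / 4`, either
  before or after the visit, which outweighs `v₀ q - v₀ x ≤ ε`.
* Paths starting further away: the kink bound at `x ± ε` together with monotonicity and the
  Lipschitz bound gives a gain of at most `-r ε ≤ - f₀ r t`.

So the supremum in the invariance identity is at most `v₀ x - f₀ r t < v₀ x - t c / 4`, a
contradiction.
-/

open Filter Set MeasureTheory intervalIntegral

/-- The Legendre conjugate `g₀` of the TASEP flux `f₀(ρ) = ρ(1−ρ)`:
`g₀(x) = −x` for `x ≤ −1`, `(1−x)²/4` for `−1 ≤ x ≤ 1`, and `0` for `x ≥ 1`. -/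
noncomputable def g0 (x : ℝ) : ℝ :=
  if x ≤ -1 then -x else if x ≤ 1 then (1 - x) ^ 2 / 4 else 0

/-- The macroscopic rate profile: `λ(x) = 1` for `x ≠ 0` and `λ(0) = c`. -/
noncomputable def lam (c : ℝ) (x : ℝ) : ℝ := if x = 0 then c else 1

/-- `w` is piecewise `C¹` on `[a,b]`: continuous on `[a,b]` and `C¹` on each cell of
some finite partition `a = p 0 < p 1 < ⋯ < p k = b`. -/
def PiecewiseC1On (w : ℝ → ℝ) (a b : ℝ) : Prop :=
  ContinuousOn w (Set.Icc a b) ∧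
    ∃ (k : ℕ) (p : ℕ → ℝ), p 0 = a ∧ p k = b ∧ (∀ i < k, p i < p (i + 1)) ∧
      ∀ i < k, ContDiffOn ℝ 1 w (Set.Icc (p i) (p (i + 1)))

/-- The running cost `∫₀ᵗ λ(w(s)) g₀(w′(s)/λ(w(s))) ds` of a path `w : [0,t] → ℝ`. -/
noncomputable def pathCost (c t : ℝ) (w : ℝ → ℝ) : ℝ :=
  ∫ s in (0 : ℝ)..t, lam c (w s) * g0 (deriv w s / lam c (w s))

/-- The variational (Hopf–Lax type) solution
`v(x,t) = sup { v₀(w(0)) − ∫₀ᵗ λ(w(s)) g₀(w′(s)/λ(w(s))) ds : w piecewise C¹, w(t) = x }`. -/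
noncomputable def vVar (c : ℝ) (v0 : ℝ → ℝ) (x t : ℝ) : ℝ :=
  sSup { a | ∃ w : ℝ → ℝ, PiecewiseC1On w 0 t ∧ w t = x ∧ a = v0 (w 0) - pathCost c t w }

/-- The optimal control cost
`I(x,t,q) = inf { ∫₀ᵗ λ(w(s)) g₀(w′(s)/λ(w(s))) ds : w piecewise C¹, w(0) = q, w(t) = x }`. -/
noncomputable def Icost (c : ℝ) (x t q : ℝ) : ℝ :=
  sInf { a | ∃ w : ℝ → ℝ, PiecewiseC1On w 0 t ∧ w 0 = q ∧ w t = x ∧ a = pathCost c t w }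

lemma lam_pos {c : ℝ} (hc : 0 < c) (x : ℝ) : 0 < lam c x := by
  unfold lam; split_ifs <;> linarith

lemma lam_le_one {c : ℝ} (hc : c < 1) (x : ℝ) : lam c x ≤ 1 := by
  unfold lam; split_ifs <;> linarith

lemma measurable_lam (c : ℝ) : Measurable (lam c) := by
  unfold lam
  exact Measurable.ite (measurableSet_singleton 0) measurable_const measurable_const

lemma measurable_g0 : Measurable g0 := by
  unfold g0
  refine Measurable.ite measurableSet_Iic (by fun_prop) ?_
  exact Measurable.ite measurableSet_Iic (by fun_prop) measurable_const

/-- The Fenchel inequality for the conjugate pair `f₀`, `g₀`. -/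
lemma g0_ge {ρ : ℝ} (h0 : 0 ≤ ρ) (h1 : ρ ≤ 1) (y : ℝ) : ρ * (1 - ρ) - ρ * y ≤ g0 y := by
  unfold g0
  split_ifs with h h'
  · nlinarith
  · nlinarith [sq_nonneg (1 - y - 2 * ρ)]
  · nlinarith

lemma g0_nonneg (y : ℝ) : 0 ≤ g0 y := by
  simpa using g0_ge le_rfl zero_le_one y

lemma g0_le (y : ℝ) : g0 y ≤ 1 + |y| := by
  unfold g0
  split_ifs with h h'
  · linarith [neg_le_abs y]
  · have := neg_le_abs y
    nlinarith [abs_nonneg y]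
  · linarith [abs_nonneg y]

/-- The rescaled form of `g0_ge`: this bounds the running cost by a constant plus an exact
derivative. -/
lemma running_ge {ρ l : ℝ} (h0 : 0 ≤ ρ) (h1 : ρ ≤ 1) (hl : 0 < l) (y : ℝ) :
    l * (ρ * (1 - ρ)) - ρ * y ≤ l * g0 (y / l) := by
  have h := mul_le_mul_of_nonneg_left (g0_ge h0 h1 (y / l)) hl.le
  have e : l * (ρ * (1 - ρ) - ρ * (y / l)) = l * (ρ * (1 - ρ)) - ρ * y := by
    field_simp
  linarith

lemma running_le {l : ℝ} (hl : 0 < l) (hl1 : l ≤ 1) (y : ℝ) :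
    l * g0 (y / l) ≤ 1 + |y| := by
  have h := mul_le_mul_of_nonneg_left (g0_le (y / l)) hl.le
  have e : l * (1 + |y / l|) = l + |y| := by
    rw [abs_div, abs_of_pos hl]; field_simp
  linarith

/-- A piecewise `C¹` path is differentiable off its finitely many nodes. -/
lemma PiecewiseC1On.exists_countable {w : ℝ → ℝ} {a b : ℝ} (h : PiecewiseC1On w a b) :
    ∃ s : Set ℝ, s.Countable ∧ ∀ x ∈ Ioo a b \ s, DifferentiableAt ℝ w x := by
  obtain ⟨-, k, p, hp0, hpk, hlt, hC⟩ := h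
  refine ⟨range p, countable_range p, ?_⟩
  rintro x ⟨hx, hxs⟩
  have hex : ∃ n, n ≤ k ∧ x ≤ p n := ⟨k, le_rfl, by rw [hpk]; exact hx.2.le⟩
  classical
  obtain ⟨hnk, hxn⟩ := Nat.find_spec hex
  have hmin := fun m => @Nat.find_min _ _ hex m
  generalize Nat.find hex = n at hnk hxn hmin
  cases n with
  | zero => rw [hp0] at hxn; exact absurd hx.1 (not_lt.2 hxn)
  | succ i =>
    have hi : p i < x := by
      by_contra hcon
      exact hmin i (Nat.lt_succ_self i) ⟨by omega, not_lt.1 hcon⟩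
    have hi' : x < p (i + 1) := lt_of_le_of_ne hxn fun e => hxs ⟨i + 1, e.symm⟩
    exact ((hC i (by omega)).differentiableOn one_ne_zero).differentiableAt (Icc_mem_nhds hi hi')

/-- On each cell `deriv w` agrees, off the endpoints, with the continuous one-sided derivative. -/
lemma PiecewiseC1On.intervalIntegrable_deriv {w : ℝ → ℝ} {a b : ℝ} (h : PiecewiseC1On w a b) :
    IntervalIntegrable (deriv w) volume a b := by
  obtain ⟨-, k, p, hp0, hpk, hlt, hC⟩ := h
  rw [← hp0, ← hpk]
  refine IntervalIntegrable.trans_iterate fun i hi => ?_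
  have hle := (hlt i hi).le
  have hcont : ContinuousOn (derivWithin w (Icc (p i) (p (i + 1)))) (Icc (p i) (p (i + 1))) :=
    (hC i hi).continuousOn_derivWithin (uniqueDiffOn_Icc (hlt i hi)) le_rfl
  refine (hcont.intervalIntegrable_of_Icc hle).congr_uIoo ?_
  intro x hx
  rw [uIoo_of_le hle] at hx
  exact derivWithin_of_mem_nhds (Icc_mem_nhds hx.1 hx.2)

lemma PiecewiseC1On.integral_deriv {w : ℝ → ℝ} {t a b : ℝ} (h : PiecewiseC1On w 0 t)
    (ha : 0 ≤ a) (hab : a ≤ b) (hb : b ≤ t) : ∫ s in a..b, deriv w s = w b - w a := by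
  obtain ⟨S, hS, hd⟩ := h.exists_countable
  refine integral_eq_of_hasDerivAt_off_countable_of_le w (deriv w) hab hS
    (h.1.mono (Icc_subset_Icc ha hb)) (fun x hx => ?_) ?_
  · exact (hd x ⟨Ioo_subset_Ioo ha hb hx.1, hx.2⟩).hasDerivAt
  · refine h.intervalIntegrable_deriv.mono_set ?_
    rw [uIcc_of_le hab, uIcc_of_le (ha.trans (hab.trans hb))]
    exact Icc_subset_Icc ha hb

/-- The running cost is genuinely integrable, so `pathCost` is never a junk value. -/
lemma PiecewiseC1On.intervalIntegrable_cost {c : ℝ} (hc : c ∈ Ioo (0 : ℝ) 1) {w : ℝ → ℝ} {t : ℝ}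
    (ht : 0 ≤ t) (h : PiecewiseC1On w 0 t) :
    IntervalIntegrable (fun s => lam c (w s) * g0 (deriv w s / lam c (w s))) volume 0 t := by
  have hI := (intervalIntegrable_const (c := (1 : ℝ))).add h.intervalIntegrable_deriv.abs
  refine hI.mono_fun' ?_ (Eventually.of_forall fun s => ?_)
  · have hw : AEMeasurable w (volume.restrict (uIoc 0 t)) := by
      rw [uIoc_of_le ht]
      exact (h.1.mono Ioc_subset_Icc_self).aemeasurable measurableSet_Ioc
    have hl : AEMeasurable (fun s => lam c (w s)) (volume.restrict (uIoc 0 t)) :=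
      (measurable_lam c).comp_aemeasurable hw
    exact (hl.mul (measurable_g0.comp_aemeasurable
      ((measurable_deriv w).aemeasurable.div hl))).aestronglyMeasurable
  · have hl := lam_pos hc.1 (w s)
    have h0 : 0 ≤ lam c (w s) * g0 (deriv w s / lam c (w s)) := mul_nonneg hl.le (g0_nonneg _)
    change ‖lam c (w s) * g0 (deriv w s / lam c (w s))‖ ≤ 1 + |deriv w s|
    rw [Real.norm_of_nonneg h0]
    exact running_le hl (lam_le_one hc.2 (w s)) (deriv w s)

/-- Integrated Fenchel inequality on a time interval where `λ (w s) f₀ ρ ≥ K`. -/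
lemma cost_lower_bound {c : ℝ} (hc : c ∈ Ioo (0 : ℝ) 1) {w : ℝ → ℝ} {t a b ρ K : ℝ}
    (h : PiecewiseC1On w 0 t) (ha : 0 ≤ a) (hab : a ≤ b) (hb : b ≤ t)
    (h0 : 0 ≤ ρ) (h1 : ρ ≤ 1) (hK : ∀ s ∈ Icc a b, K ≤ lam c (w s) * (ρ * (1 - ρ))) :
    K * (b - a) - ρ * (w b - w a)
      ≤ ∫ s in a..b, lam c (w s) * g0 (deriv w s / lam c (w s)) := by
  have ht : 0 ≤ t := ha.trans (hab.trans hb)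
  have hsub : uIcc a b ⊆ uIcc 0 t := by
    rw [uIcc_of_le hab, uIcc_of_le ht]; exact Icc_subset_Icc ha hb
  have hcost := (h.intervalIntegrable_cost hc ht).mono_set hsub
  have hder := (h.intervalIntegrable_deriv).mono_set hsub
  have hconst : IntervalIntegrable (fun _ : ℝ => K) volume a b := intervalIntegrable_const
  have hmono := integral_mono_on hab (hconst.sub (hder.const_mul ρ)) hcost fun s hs =>
    (sub_le_sub_right (hK s hs) _).trans (running_ge h0 h1 (lam_pos hc.1 (w s)) (deriv w s))
  rw [intervalIntegral.integral_sub hconst (hder.const_mul ρ), intervalIntegral.integral_const,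
    intervalIntegral.integral_const_mul, h.integral_deriv ha hab hb, smul_eq_mul] at hmono
  linarith

lemma cost_nonneg {c : ℝ} (hc : c ∈ Ioo (0 : ℝ) 1) {w : ℝ → ℝ} {t a b : ℝ}
    (h : PiecewiseC1On w 0 t) (ha : 0 ≤ a) (hab : a ≤ b) (hb : b ≤ t) :
    0 ≤ ∫ s in a..b, lam c (w s) * g0 (deriv w s / lam c (w s)) := by
  simpa using cost_lower_bound hc (K := 0) h ha hab hb le_rfl zero_le_one (by simp)

/-- The cost is at least the net displacement to the left. -/
lemma cost_ge_sub {c : ℝ} (hc : c ∈ Ioo (0 : ℝ) 1) {w : ℝ → ℝ} {t a b : ℝ}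
    (h : PiecewiseC1On w 0 t) (ha : 0 ≤ a) (hab : a ≤ b) (hb : b ≤ t) :
    w a - w b ≤ ∫ s in a..b, lam c (w s) * g0 (deriv w s / lam c (w s)) := by
  simpa using cost_lower_bound hc (K := 0) h ha hab hb zero_le_one le_rfl (by simp)

/-- A path through the origin pays for its leftward motion before and after the visit. -/
lemma pathCost_ge_of_hit {c : ℝ} (hc : c ∈ Ioo (0 : ℝ) 1) {w : ℝ → ℝ} {t s : ℝ}
    (h : PiecewiseC1On w 0 t) (hs : s ∈ Icc 0 t) (h0 : w s = 0) :
    w 0 ≤ pathCost c t w ∧ -w t ≤ pathCost c t w := by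
  have hI := h.intervalIntegrable_cost hc (hs.1.trans hs.2)
  have hmem : s ∈ uIcc 0 t := Icc_subset_uIcc hs
  have hadd := integral_add_adjacent_intervals
    (hI.mono_set (uIcc_subset_uIcc_left hmem)) (hI.mono_set (uIcc_subset_uIcc_right hmem))
  have a1 := cost_ge_sub hc h le_rfl hs.1 hs.2
  have a2 := cost_ge_sub hc h hs.1 hs.2 le_rfl
  have b1 := cost_nonneg hc h le_rfl hs.1 hs.2
  have b2 := cost_nonneg hc h hs.1 hs.2 le_rfl
  unfold pathCost
  constructor <;> linarith

/-- Along a path avoiding the origin the rate is `1`, so the cost is at least that of the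
homogeneous problem. -/
lemma pathCost_ge_of_avoid {c : ℝ} (hc : c ∈ Ioo (0 : ℝ) 1) {w : ℝ → ℝ} {t ρ : ℝ} (ht : 0 ≤ t)
    (h : PiecewiseC1On w 0 t) (hav : ∀ s ∈ Icc 0 t, w s ≠ 0) (h0 : 0 ≤ ρ) (h1 : ρ ≤ 1) :
    ρ * (1 - ρ) * t - ρ * (w t - w 0) ≤ pathCost c t w := by
  simpa [pathCost] using cost_lower_bound hc (K := ρ * (1 - ρ)) h le_rfl ht le_rfl h0 h1
    fun s hs => by simp [lam, hav s hs]

/-- Straight lines are admissible, so the infimum defining `Icost` is over a nonempty set. -/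
lemma exists_path {t : ℝ} (ht : 0 < t) (x q : ℝ) :
    ∃ w : ℝ → ℝ, PiecewiseC1On w 0 t ∧ w 0 = q ∧ w t = x := by
  refine ⟨fun s => q + s * ((x - q) / t), ⟨by fun_prop, 1, fun i => i * t, by simp, by simp, ?_, ?_⟩,
    by simp, by field_simp; ring⟩
  · intro i _; push_cast; linarith
  · intro i _; fun_prop

/-- Lemma 5.1: if `v₀` is nondecreasing, 1-Lipschitz, and satisfies the
invariance identity `sup_q {v₀(q) − I(x,t,q)} = v₀(x) − tc/4`, then there is no point
`x ≠ 0` at which `v₀` has local slope at least `ρ*+δ` from the left and at most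
`1−ρ*−δ` from the right. -/
theorem no_downward_kink_away_from_origin
    (c : ℝ) (hc : c ∈ Set.Ioo (0 : ℝ) 1)
    (ρs : ℝ) (hρs : ρs = 1 / 2 - Real.sqrt (1 - c) / 2)
    (v0 : ℝ → ℝ) (hmono : Monotone v0) (hlip : LipschitzWith 1 v0)
    (hinv : ∀ x t : ℝ, 0 < t →
      sSup { a | ∃ q : ℝ, a = v0 q - Icost c x t q } = v0 x - t * c / 4) :
    ¬ ∃ x : ℝ, x ≠ 0 ∧ ∃ ε > (0 : ℝ), ∃ δ > (0 : ℝ),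
      (∀ q ∈ Set.Icc (x - ε) x, v0 q + (ρs + δ) * (x - q) ≤ v0 x) ∧
      (∀ q ∈ Set.Icc x (x + ε), v0 q - (1 - ρs - δ) * (q - x) ≤ v0 x) := by
  rintro ⟨x, hx, ε, hε, δ, hδ, hleft, hright⟩
  have hsq : Real.sqrt (1 - c) ^ 2 = 1 - c := Real.sq_sqrt (by linarith [hc.2])
  have hsp : 0 < Real.sqrt (1 - c) := Real.sqrt_pos.2 (by linarith [hc.2])
  have hs1 : Real.sqrt (1 - c) < 1 := by nlinarith [hc.1]
  -- Shrink `δ` so that `ρ* < r ≤ 1/2`, and `ε` so that the origin stays away from the window.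
  obtain ⟨r, hr, hrδ, hr2⟩ : ∃ r, ρs < r ∧ r ≤ ρs + δ ∧ r ≤ 1 / 2 :=
    ⟨min (ρs + δ) (1 / 2), lt_min (by linarith) (by linarith), min_le_left _ _, min_le_right _ _⟩
  obtain ⟨e, he, heε, hex⟩ : ∃ e, 0 < e ∧ e ≤ ε ∧ e ≤ |x| / 4 :=
    ⟨min ε (|x| / 4), lt_min hε (by have := abs_pos.2 hx; linarith), min_le_left _ _,
      min_le_right _ _⟩
  have hr0 : 0 < r := by linarith
  have hK : c / 4 < r * (1 - r) := by nlinarith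
  have hL : ∀ q ∈ Icc (x - e) x, v0 q + r * (x - q) ≤ v0 x := fun q hq => by
    have := hleft q ⟨by linarith [hq.1], hq.2⟩
    nlinarith [hq.2]
  have hR : ∀ q ∈ Icc x (x + e), v0 q - (1 - r) * (q - x) ≤ v0 x := fun q hq => by
    have := hright q ⟨hq.1, by linarith [hq.2]⟩
    nlinarith [hq.1]
  have hLip : ∀ p q, p ≤ q → v0 q ≤ v0 p + (q - p) := fun p q hpq => by
    have := hlip.dist_le_mul q p
    rw [Real.dist_eq, Real.dist_eq, abs_of_nonneg (sub_nonneg.2 hpq), NNReal.coe_one,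
      one_mul] at this
    linarith [le_abs_self (v0 q - v0 p)]
  have hKe : r * (1 - r) * e ≤ r * e := by nlinarith [mul_pos hr0 he]
  have hKe' : r * (1 - r) * e ≤ |x| / 4 := by nlinarith [mul_pos hr0 he]
  have key : ∀ w : ℝ → ℝ, PiecewiseC1On w 0 e → w e = x →
      v0 (w 0) - v0 x + r * (1 - r) * e ≤ pathCost c e w := by
    intro w hw hwx
    have hc0 : 0 ≤ pathCost c e w := cost_nonneg hc hw le_rfl he.le le_rfl
    have hc1 : w 0 - x ≤ pathCost c e w := hwx ▸ cost_ge_sub hc hw le_rfl he.le le_rfl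
    rcases lt_or_ge (w 0) (x - e) with hq | hq
    · have h1 := hmono hq.le
      have h2 := hL (x - e) ⟨le_rfl, by linarith⟩
      linarith
    rcases lt_or_ge (x + e) (w 0) with hq' | hq'
    · have h1 := hLip (x + e) (w 0) hq'.le
      have h2 := hR (x + e) ⟨by linarith, le_rfl⟩
      linarith
    by_cases hhit : ∃ s ∈ Icc 0 e, w s = 0
    · obtain ⟨s, hs, hs0⟩ := hhit
      obtain ⟨h1, h2⟩ := pathCost_ge_of_hit hc hw hs hs0
      rw [hwx] at h2
      have h3 : v0 (w 0) ≤ v0 x + e := (hmono hq').trans (by linarith [hLip x (x + e) (by linarith)])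
      -- Leftward motion costs at least `w 0 ≥ x - e` if `x > 0`, and at least `-x` if `x < 0`.
      rcases abs_cases x with ⟨ha, -⟩ | ⟨ha, -⟩ <;> rw [ha] at hex hKe' <;> linarith
    · push Not at hhit
      rcases le_total (w 0) x with hqx | hqx
      · have h1 := pathCost_ge_of_avoid hc he.le hw hhit hr0.le (by linarith)
        have h2 := hL (w 0) ⟨hq, hqx⟩
        rw [hwx] at h1
        linarith
      · have h1 := pathCost_ge_of_avoid hc he.le hw hhit (ρ := 1 - r) (by linarith) (by linarith)
        have h2 := hR (w 0) ⟨hqx, hq'⟩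
        rw [hwx] at h1
        linarith
  have hsup : sSup { a | ∃ q : ℝ, a = v0 q - Icost c x e q } ≤ v0 x - r * (1 - r) * e := by
    refine csSup_le ⟨_, 0, rfl⟩ ?_
    rintro _ ⟨q, rfl⟩
    have : v0 q - v0 x + r * (1 - r) * e ≤ Icost c x e q := by
      obtain ⟨w, hw, hw0, hwx⟩ := exists_path he x q
      refine le_csInf ⟨_, w, hw, hw0, hwx, rfl⟩ ?_
      rintro _ ⟨u, hu, rfl, hux, rfl⟩
      exact key u hu hux
    linarith
  rw [hinv x e he] at hsup
  nlinarith [mul_lt_mul_of_pos_right hK he]
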